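/- arXiv:2008.04990 — 2 statements merged into one kernel-verified Lean document; each statement's English description precedes it below -/
import Mathlib

section
/- Let f, f' : S × A → [0, V_max] and ε_dct > 0. Define the discretizations f̄(s,a) := ε_dct · ⌊f(s,a)/ε_dct⌋ and f̄'(s,a) := ε_dct · ⌊f'(s,a)/ε_dct⌋, and the aggregation φ(s,a) := (f̄(s,a), f̄'(s,a)). Then: (i) the number of distinct values taken by φ is at most (⌊V_max/ε_dct⌋ + 1)²; and (ii) if min(‖f − Q⋆‖_∞, ‖f' − Q⋆‖_∞) ≤ ε_F, then ε_φ := min_{g ∈ G_φ} ‖g − Q⋆‖_∞ ≤ ε_F + ε_dct. -/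
/-- `V_f(s) := max_a f(s,a)`. -/
noncomputable def Vof {S A : Type*} [Fintype A] [Nonempty A]
    (f : S × A → ℝ) (s : S) : ℝ :=
  Finset.univ.sup' Finset.univ_nonempty (fun a => f (s, a))

/-- The Bellman optimality operator `(T f)(s,a) = R(s,a) + γ ∑ s', P(s'|s,a) V_f(s')`. -/
noncomputable def bellmanT {S A : Type*} [Fintype S] [Fintype A] [Nonempty A]
    (P : S → A → S → ℝ) (R : S → A → ℝ) (γ : ℝ) (f : S × A → ℝ) : S × A → ℝ :=
  fun q => R q.1 q.2 + γ * ∑ s', P q.1 q.2 s' * Vof f s'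

/-- The projected Bellman operator `T_φ^μ`, which averages `T f` over each
aggregation cell with weights proportional to `μ`. -/
noncomputable def projT {S A X : Type*} [Fintype S] [Fintype A] [Nonempty A]
    [DecidableEq X]
    (P : S → A → S → ℝ) (R : S → A → ℝ) (γ : ℝ)
    (μ : S × A → ℝ) (φ : S × A → X) (f : S × A → ℝ) : S × A → ℝ :=
  fun q => (∑ q', if φ q' = φ q then μ q' * bellmanT P R γ f q' else 0)
         / (∑ q', if φ q' = φ q then μ q' else 0)

/-- `‖f‖_∞ = max_{s,a} |f(s,a)|`. -/
noncomputable def supNorm {S A : Type*} [Fintype S] [Fintype A] [Nonempty S] [Nonempty A]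
    (f : S × A → ℝ) : ℝ :=
  Finset.univ.sup' Finset.univ_nonempty (fun q => |f q|)

/-- A function is piecewise constant with respect to an aggregation `φ` if it is
constant on each aggregation cell; `G_φ` is the class of such functions. -/
def PiecewiseConst {S A X : Type*} (φ : S × A → X) (g : S × A → ℝ) : Prop :=
  ∀ q q' : S × A, φ q = φ q' → g q = g q'

section Discretize

variable {K : Type*} [Field K] [LinearOrder K] [FloorRing K]

/-- Rounding of `x` down to the grid `ε ℤ`: the discretization `f̄` is `discretize ε ∘ f`.
For `ε = 0` the quotient `x / 0 = 0` makes it the zero map. -/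
def discretize (ε x : K) : K :=
  ε * ⌊x / ε⌋

/-- The aggregation `φ = (f̄, f̄')`, whose cells are the joint level sets of the
discretizations of `f` and `f'`, so that both are piecewise constant. The index type `ι`
stands for `S × A`. -/
def discretizePair {ι : Type*} (ε : K) (f f' : ι → K) (q : ι) : K × K :=
  (discretize ε (f q), discretize ε (f' q))

theorem range_discretizePair_subset {ι : Type*} {f f' : ι → K} {s t : Set K} (ε : K)
    (hf : ∀ q, f q ∈ s) (hf' : ∀ q, f' q ∈ t) :
    Set.range (discretizePair ε f f') ⊆ (discretize ε '' s) ×ˢ (discretize ε '' t) := by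
  rintro _ ⟨q, rfl⟩
  exact ⟨Set.mem_image_of_mem _ (hf q), Set.mem_image_of_mem _ (hf' q)⟩

variable [IsStrictOrderedRing K]

theorem abs_discretize_sub_le {ε : K} (hε : 0 < ε) (x : K) : |discretize ε x - x| ≤ ε := by
  rw [abs_sub_comm, discretize, mul_comm, abs_of_nonneg (Int.sub_floor_div_mul_nonneg x hε)]
  exact (Int.sub_floor_div_mul_lt x hε).le

theorem abs_discretize_sub_le_add {ε δ x y : K} (hε : 0 < ε) (hxy : |x - y| ≤ δ) :
    |discretize ε x - y| ≤ δ + ε :=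
  calc |discretize ε x - y| ≤ |discretize ε x - x| + |x - y| := abs_sub_le _ _ _
    _ ≤ ε + δ := add_le_add (abs_discretize_sub_le hε x) hxy
    _ = δ + ε := add_comm _ _

theorem discretize_image_Icc_subset {ε : K} (hε : 0 < ε) (a b : K) :
    discretize ε '' Set.Icc a b ⊆
      (fun n : ℤ => ε * (n : K)) '' Set.Icc ⌊a / ε⌋ ⌊b / ε⌋ := by
  rintro _ ⟨x, ⟨hax, hxb⟩, rfl⟩
  exact ⟨⌊x / ε⌋, ⟨by gcongr, by gcongr⟩, rfl⟩

theorem finite_discretize_image_Icc {ε : K} (hε : 0 < ε) (a b : K) :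
    (discretize ε '' Set.Icc a b).Finite :=
  ((Set.finite_Icc _ _).image _).subset (discretize_image_Icc_subset hε a b)

theorem ncard_discretize_image_Icc_le {ε : K} (hε : 0 < ε) (a b : K) :
    (discretize ε '' Set.Icc a b).ncard ≤ (⌊b / ε⌋ + 1 - ⌊a / ε⌋).toNat := by
  have hfin := Set.finite_Icc ⌊a / ε⌋ ⌊b / ε⌋
  calc (discretize ε '' Set.Icc a b).ncard
      ≤ ((fun n : ℤ => ε * (n : K)) '' Set.Icc ⌊a / ε⌋ ⌊b / ε⌋).ncard :=
        Set.ncard_le_ncard (discretize_image_Icc_subset hε a b) (hfin.image _)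
    _ ≤ (Set.Icc ⌊a / ε⌋ ⌊b / ε⌋).ncard := Set.ncard_image_le hfin
    _ = (⌊b / ε⌋ + 1 - ⌊a / ε⌋).toNat := by
        rw [← Finset.coe_Icc, Set.ncard_coe_finset, Int.card_Icc]

variable {ι : Type*} {f f' : ι → K} {a b : K}

theorem finite_range_discretizePair {ε : K} (hε : 0 < ε)
    (hf : ∀ q, f q ∈ Set.Icc a b) (hf' : ∀ q, f' q ∈ Set.Icc a b) :
    (Set.range (discretizePair ε f f')).Finite :=
  have hfin := finite_discretize_image_Icc hε a b
  (hfin.prod hfin).subset (range_discretizePair_subset ε hf hf')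

theorem ncard_range_discretizePair_le {ε : K} (hε : 0 < ε)
    (hf : ∀ q, f q ∈ Set.Icc a b) (hf' : ∀ q, f' q ∈ Set.Icc a b) :
    (Set.range (discretizePair ε f f')).ncard ≤ (⌊b / ε⌋ + 1 - ⌊a / ε⌋).toNat ^ 2 := by
  have hfin := finite_discretize_image_Icc hε a b
  calc (Set.range (discretizePair ε f f')).ncard
      ≤ ((discretize ε '' Set.Icc a b) ×ˢ (discretize ε '' Set.Icc a b)).ncard :=
        Set.ncard_le_ncard (range_discretizePair_subset ε hf hf') (hfin.prod hfin)
    _ = (discretize ε '' Set.Icc a b).ncard ^ 2 := by rw [Set.ncard_prod, sq]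
    _ ≤ (⌊b / ε⌋ + 1 - ⌊a / ε⌋).toNat ^ 2 := by
        gcongr
        exact ncard_discretize_image_Icc_le hε a b

theorem exists_factorsThrough_discretizePair {ε δ : K} (hε : 0 < ε) {Q : ι → K}
    (hQ : (∀ q, |f q - Q q| ≤ δ) ∨ ∀ q, |f' q - Q q| ≤ δ) :
    ∃ g : ι → K, g.FactorsThrough (discretizePair ε f f') ∧ ∀ q, |g q - Q q| ≤ δ + ε := by
  rcases hQ with hQ | hQ
  · exact ⟨fun q => discretize ε (f q), fun _ _ h => congrArg Prod.fst h,
      fun q => abs_discretize_sub_le_add hε (hQ q)⟩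
  · exact ⟨fun q => discretize ε (f' q), fun _ _ h => congrArg Prod.snd h,
      fun q => abs_discretize_sub_le_add hε (hQ q)⟩

theorem stmt14_general {ε δ : K} (hε : 0 < ε) {Q : ι → K}
    (hf : ∀ q, f q ∈ Set.Icc a b) (hf' : ∀ q, f' q ∈ Set.Icc a b)
    (hQ : (∀ q, |f q - Q q| ≤ δ) ∨ ∀ q, |f' q - Q q| ≤ δ) :
    (Set.range (discretizePair ε f f')).Finite ∧
      (Nat.card (Set.range (discretizePair ε f f')) : ℤ) ≤ (⌊b / ε⌋ + 1 - ⌊a / ε⌋) ^ 2 ∧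
      ∃ g : ι → K, g.FactorsThrough (discretizePair ε f f') ∧ ∀ q, |g q - Q q| ≤ δ + ε := by
  have toNat_sq_le (n : ℤ) : (n.toNat : ℤ) ^ 2 ≤ n ^ 2 := by
    rcases le_total 0 n with hn | hn
    · rw [Int.toNat_of_nonneg hn]
    · simpa [Int.toNat_of_nonpos hn] using sq_nonneg n
  refine ⟨finite_range_discretizePair hε hf hf', ?_, exists_factorsThrough_discretizePair hε hQ⟩
  rw [Nat.card_coe_set_eq]
  exact le_trans (mod_cast ncard_range_discretizePair_le hε hf hf') (toNat_sq_le _)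

end Discretize

theorem supNorm_le_iff {S A : Type*} [Fintype S] [Fintype A] [Nonempty S] [Nonempty A]
    {g : S × A → ℝ} {c : ℝ} : supNorm g ≤ c ↔ ∀ q, |g q| ≤ c := by
  simp only [supNorm, Finset.sup'_le_iff, Finset.mem_univ, true_imp_iff]

/-- (Discretization.)  Given `f, f' : S × A → [0, V_max]` and
`ε_dct > 0`, let `f̄ := ε_dct ⌊f/ε_dct⌋`, `f̄' := ε_dct ⌊f'/ε_dct⌋` and
`φ(s,a) := (f̄(s,a), f̄'(s,a))`.  Then (i) `φ` takes at most `(⌊V_max/ε_dct⌋ + 1)²`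
distinct values, and (ii) if `min(‖f − Q⋆‖_∞, ‖f' − Q⋆‖_∞) ≤ ε_F`, then
`ε_φ := min_{g ∈ G_φ} ‖g − Q⋆‖_∞ ≤ ε_F + ε_dct`. -/
theorem stmt14 {S A : Type*} [Fintype S] [Fintype A] [Nonempty S] [Nonempty A]
    (P : S → A → S → ℝ) (R : S → A → ℝ) (Rmax γ Vmax : ℝ)
    (hP0 : ∀ s a s', 0 ≤ P s a s') (hP1 : ∀ s a, ∑ s', P s a s' = 1)
    (hR : ∀ s a, 0 ≤ R s a ∧ R s a ≤ Rmax)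
    (hγ0 : 0 ≤ γ) (hγ1 : γ < 1)
    (hVmax : Vmax = Rmax / (1 - γ))
    (Qstar : S × A → ℝ) (hQstar : bellmanT P R γ Qstar = Qstar)
    (f f' : S × A → ℝ)
    (hf : ∀ q, 0 ≤ f q ∧ f q ≤ Vmax) (hf' : ∀ q, 0 ≤ f' q ∧ f' q ≤ Vmax)
    (εdct : ℝ) (hεdct : 0 < εdct)
    (fbar fbar' : S × A → ℝ)
    (hfbar : ∀ q, fbar q = εdct * (⌊f q / εdct⌋ : ℝ))
    (hfbar' : ∀ q, fbar' q = εdct * (⌊f' q / εdct⌋ : ℝ))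
    (φ : S × A → ℝ × ℝ) (hφ : ∀ q, φ q = (fbar q, fbar' q))
    (εF : ℝ)
    (hmin : min (supNorm (fun q => f q - Qstar q))
              (supNorm (fun q => f' q - Qstar q)) ≤ εF)
    (εφ : ℝ)
    (hεφ : IsLeast {e : ℝ | ∃ g : S × A → ℝ, PiecewiseConst φ g ∧
              supNorm (fun q => g q - Qstar q) = e} εφ) :
    -- (i) the number of distinct values taken by φ
    ((Nat.card (Set.range φ) : ℤ) ≤ (⌊Vmax / εdct⌋ + 1) ^ 2) ∧
    -- (ii) the approximation error of the induced piecewise-constant class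
    εφ ≤ εF + εdct := by
  obtain rfl : φ = discretizePair εdct f f' :=
    funext fun q => by rw [hφ, hfbar, hfbar', discretizePair, discretize, discretize]
  obtain ⟨-, hcard, g, hg, hgQ⟩ := stmt14_general hεdct hf hf'
    ((min_le_iff.1 hmin).imp supNorm_le_iff.1 supNorm_le_iff.1)
  exact ⟨by simpa using hcard,
    (hεφ.2 ⟨g, fun _ _ h => hg h, rfl⟩).trans (supNorm_le_iff.2 hgQ)⟩
end

section
/- There exist a finite MDP (S, A, P, R, γ, d0) with γ = 0.9 and deterministic initial state, a probability distribution μ on S × A whose support Ω is a strict subset of S × A, an aggregation φ : S × A → X, and a function Q : S × A → ℝ, such that: (i) every occupancy distribution d_t^π of every policy π satisfies d_t^π(s,a) ≤ C μ(s,a) for all (s,a) for some finite constant C (so the standard concentrability Assumption 2 holds); (ii) Q ≠ Q⋆, yet both Q⋆ and Q satisfy f(s,a) = (T_φ^μ f)(s,a) for every (s,a) ∈ Ω, where T_φ^μ averages over the μ-support of each cell; and (iii) the greedy policy π_Q of Q is strictly suboptimal: the expected discounted return of π_Q from d0 is strictly less than that of the optimal policy. -/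
open scoped Classical

/-- A finite MDP: finite nonempty state and action spaces, a row-stochastic
transition kernel, a nonnegative reward function, a discount factor `γ ∈ [0,1)`,
and an initial state distribution. -/
structure FinMDP where
  S : Type
  A : Type
  [fS : Fintype S]
  [fA : Fintype A]
  [neS : Nonempty S]
  [neA : Nonempty A]
  P : S → A → S → ℝ
  R : S → A → ℝ
  γ : ℝ
  d0 : S → ℝ
  P_nonneg : ∀ s a s', 0 ≤ P s a s'
  P_sum : ∀ s a, ∑ s', P s a s' = 1
  R_nonneg : ∀ s a, 0 ≤ R s a
  γ_nonneg : 0 ≤ γ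
  γ_lt_one : γ < 1
  d0_nonneg : ∀ s, 0 ≤ d0 s
  d0_sum : ∑ s, d0 s = 1

attribute [instance] FinMDP.fS FinMDP.fA FinMDP.neS FinMDP.neA

namespace FinMDP

/-- The Bellman optimality operator
`(T f)(s,a) = R(s,a) + γ ∑ s', P(s'|s,a) max_{a'} f(s',a')`. -/
noncomputable def bellman (M : FinMDP) (f : M.S × M.A → ℝ) : M.S × M.A → ℝ :=
  fun q => M.R q.1 q.2 +
    M.γ * ∑ s', M.P q.1 q.2 s' *
      Finset.univ.sup' Finset.univ_nonempty (fun a' => f (s', a'))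

/-- A stochastic policy: a probability distribution over actions at every state. -/
def IsPolicy (M : FinMDP) (π : M.S → M.A → ℝ) : Prop :=
  (∀ s a, 0 ≤ π s a) ∧ ∀ s, ∑ a, π s a = 1

/-- The occupancy distributions `d_t^π`:
`d₀^π(s,a) = d0(s) π(a|s)` and
`d_{t+1}^π(s,a) = (∑_{s̃,ã} d_t^π(s̃,ã) P(s|s̃,ã)) π(a|s)`. -/
noncomputable def occ (M : FinMDP) (π : M.S → M.A → ℝ) : ℕ → M.S × M.A → ℝ
  | 0 => fun q => M.d0 q.1 * π q.1 q.2
  | (t + 1) => fun q =>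
      (∑ q' : M.S × M.A, M.occ π t q' * M.P q'.1 q'.2 q.1) * π q.1 q.2

/-- The expected discounted return of a policy `π` from the initial distribution:
`J(π) = E[∑_{t ≥ 0} γ^t r_t] = ∑_{t ≥ 0} γ^t ∑_{s,a} d_t^π(s,a) R(s,a)`. -/
noncomputable def ret (M : FinMDP) (π : M.S → M.A → ℝ) : ℝ :=
  ∑' t : ℕ, M.γ ^ t * ∑ q : M.S × M.A, M.occ π t q * M.R q.1 q.2

/-- The projected Bellman operator `T_φ^μ`, averaging `T f` over the `μ`-support of
each aggregation cell. -/
noncomputable def projBellman (M : FinMDP) {X : Type} (φ : M.S × M.A → X)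
    (μ : M.S × M.A → ℝ) (f : M.S × M.A → ℝ) : M.S × M.A → ℝ :=
  fun q => (∑ q', if φ q' = φ q then μ q' * M.bellman f q' else 0)
         / (∑ q', if φ q' = φ q then μ q' else 0)

end FinMDP

/-!
Consider two absorbing states: a start state, where one action earns `1` and the other `0`, and an
unreachable state, where both actions earn `γ`. The optimal values are `1 / (1 - γ)` for the good
action at the start and `γ / (1 - γ)` elsewhere, so the aggregation that isolates the good
state-action pair is compatible with `Q⋆`. Let `μ` be uniform on all pairs except one pair of the
unreachable state. The occupancies are still covered, but the value of a function at the missing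
pair is unconstrained by the projected equation, while it enters the Bellman backup of the other
unreachable pair, which shares its cell with the bad action. Raising it inflates the common value
`v` of that cell at will, whereas the good action only receives `1 + γ * v`, which is less than
`v` as soon as `v > 1 / (1 - γ)`.
-/

theorem sum_ite_fiber_pos {α X R : Type*} [Fintype α] [AddCommMonoid R] [PartialOrder R]
    [IsOrderedCancelAddMonoid R] {φ : α → X} {μ : α → R} {q : α}
    (hμ : ∀ q, 0 ≤ μ q) (hq : 0 < μ q) : 0 < ∑ q', if φ q' = φ q then μ q' else 0 :=
  Finset.sum_pos' (fun q' _ => by split_ifs <;> simp [hμ]) ⟨q, Finset.mem_univ q, by simpa using hq⟩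

namespace FinMDP

variable {M : FinMDP}

theorem projBellman_eq_self_of_factorsThrough {X : Type} {φ : M.S × M.A → X}
    {μ f : M.S × M.A → ℝ} {q : M.S × M.A} (hμ : ∀ q, 0 ≤ μ q) (hq : 0 < μ q)
    (hf : M.bellman f = f) (hφ : f.FactorsThrough φ) : M.projBellman φ μ f q = f q := by
  rw [projBellman, div_eq_iff (sum_ite_fiber_pos hμ hq).ne', Finset.mul_sum]
  refine Finset.sum_congr rfl fun q' _ => ?_
  split_ifs with hq'
  · rw [hf, hφ hq', mul_comm]
  · rw [mul_zero]

theorem IsPolicy.le_one {π : M.S → M.A → ℝ} (hπ : M.IsPolicy π) (s : M.S) (a : M.A) :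
    π s a ≤ 1 :=
  hπ.2 s ▸ Finset.single_le_sum (fun a _ => hπ.1 s a) (Finset.mem_univ a)

/-- The policy that plays `g s` at every state `s`, as a stochastic policy. -/
noncomputable def deterministic (M : FinMDP) (g : M.S → M.A) : M.S → M.A → ℝ :=
  fun s a => if a = g s then 1 else 0

theorem isPolicy_deterministic (g : M.S → M.A) : M.IsPolicy (M.deterministic g) :=
  ⟨fun _ _ => ite_nonneg zero_le_one le_rfl, fun s => by simp [deterministic]⟩

/-- Every state is absorbing: no action ever leaves the current state. -/
def AllAbsorbing (M : FinMDP) : Prop :=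
  ∀ s a s', M.P s a s' = if s' = s then 1 else 0

namespace AllAbsorbing

theorem bellman_apply (hM : M.AllAbsorbing) (f : M.S × M.A → ℝ) (q : M.S × M.A) :
    M.bellman f q =
      M.R q.1 q.2 + M.γ * Finset.univ.sup' Finset.univ_nonempty fun a => f (q.1, a) := by
  simp [bellman, hM q.1 q.2]

theorem occ_eq (hM : M.AllAbsorbing) {π : M.S → M.A → ℝ} (hπ : M.IsPolicy π) (t : ℕ)
    (q : M.S × M.A) : M.occ π t q = M.d0 q.1 * π q.1 q.2 := by
  induction t generalizing q with
  | zero => rfl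
  | succ t ih =>
    have state_mass : ∑ q' : M.S × M.A, M.occ π t q' * M.P q'.1 q'.2 q.1 = M.d0 q.1 := by
      simp [ih, hM _ _ _, Fintype.sum_prod_type_right, ← Finset.mul_sum, hπ.2]
    simp only [occ, state_mass]

theorem occ_le (hM : M.AllAbsorbing) {π : M.S → M.A → ℝ} (hπ : M.IsPolicy π) (t : ℕ)
    (q : M.S × M.A) : M.occ π t q ≤ M.d0 q.1 :=
  hM.occ_eq hπ t q ▸ mul_le_of_le_one_right (M.d0_nonneg q.1) (hπ.le_one q.1 q.2)

theorem ret_eq (hM : M.AllAbsorbing) {π : M.S → M.A → ℝ} (hπ : M.IsPolicy π) :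
    M.ret π = (1 - M.γ)⁻¹ * ∑ q : M.S × M.A, M.d0 q.1 * π q.1 q.2 * M.R q.1 q.2 := by
  simp only [ret, hM.occ_eq hπ]
  rw [tsum_mul_right, tsum_geometric_of_lt_one M.γ_nonneg M.γ_lt_one]

theorem ret_deterministic (hM : M.AllAbsorbing) (g : M.S → M.A) :
    M.ret (M.deterministic g) = (1 - M.γ)⁻¹ * ∑ s, M.d0 s * M.R s (g s) := by
  simp [hM.ret_eq (isPolicy_deterministic g), deterministic, Fintype.sum_prod_type]

end AllAbsorbing

end FinMDP

namespace Counterexample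

/-- The MDP of the counterexample, with two absorbing states and two actions: `true` is the start
state, where the action earns `1` or `0` according as it is `true` or `false`, and `false` is the
unreachable state, where both actions earn `γ`. -/
noncomputable abbrev mdp (γ : ℝ) (hγ₀ : 0 ≤ γ) (hγ₁ : γ < 1) : FinMDP where
  S := Bool
  A := Bool
  P s _ s' := if s' = s then 1 else 0
  R s a := bif s then bif a then 1 else 0 else γ
  γ := γ
  d0 s := bif s then 1 else 0
  P_nonneg _ _ _ := ite_nonneg zero_le_one le_rfl
  P_sum _ _ := by simp
  R_nonneg s a := by cases s <;> cases a <;> simp [hγ₀]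
  γ_nonneg := hγ₀
  γ_lt_one := hγ₁
  d0_nonneg s := by cases s <;> simp
  d0_sum := by simp

/-- The data distribution: uniform on the state-action pairs other than `(false, true)`. -/
noncomputable def dataDist (q : Bool × Bool) : ℝ :=
  if q = (false, true) then 0 else 1 / 3

/-- The aggregation with two cells, which separates the good pair `(true, true)` from the
others. -/
def cell (q : Bool × Bool) : Bool :=
  q.1 && q.2

/-- The optimal action-value function `Q⋆` of `mdp γ`. -/
noncomputable def optimalQ (γ : ℝ) (q : Bool × Bool) : ℝ :=
  bif cell q then 1 / (1 - γ) else γ / (1 - γ)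

/-- The spurious fixed point of the projected Bellman operator. Its common value on the supported
pairs of the cell of `(true, false)` is `v = 2 / (1 - γ)`. The excess over `v` at the unsupported
pair `(false, true)` makes the Bellman backups at `(true, false)` and `(false, false)` equal to
`γ * v` and `γ * v + 4`, and the average `γ * v + 2` of these is again `v`. -/
noncomputable def spuriousQ (γ : ℝ) : Bool × Bool → ℝ
  | (true, true) => 1 + γ * (2 / (1 - γ))
  | (false, true) => 2 / (1 - γ) + (4 - γ) / γ
  | (_, false) => 2 / (1 - γ)

theorem dataDist_nonneg (q : Bool × Bool) : 0 ≤ dataDist q :=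
  ite_nonneg le_rfl (by norm_num)

theorem sum_dataDist : ∑ q, dataDist q = 1 := by
  norm_num [dataDist, Fintype.sum_prod_type]

theorem support_dataDist_ne_univ : {q | 0 < dataDist q} ≠ Set.univ :=
  (Set.ne_univ_iff_exists_notMem _).2 ⟨(false, true), by simp [dataDist]⟩

theorem optimalQ_factorsThrough (γ : ℝ) : (optimalQ γ).FactorsThrough cell := by
  intro q q' h
  rw [optimalQ, optimalQ, h]

variable {γ : ℝ}

theorem allAbsorbing_mdp (hγ₀ : 0 ≤ γ) (hγ₁ : γ < 1) : (mdp γ hγ₀ hγ₁).AllAbsorbing := by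
  intro s _ s'
  simp

theorem bellman_mdp (hγ₀ : 0 ≤ γ) (hγ₁ : γ < 1) (f : Bool × Bool → ℝ) (q : Bool × Bool) :
    (mdp γ hγ₀ hγ₁).bellman f q =
      (bif q.1 then bif q.2 then 1 else 0 else γ) + γ * max (f (q.1, true)) (f (q.1, false)) := by
  rw [(allAbsorbing_mdp hγ₀ hγ₁).bellman_apply]
  simp

theorem projBellman_mdp (hγ₀ : 0 ≤ γ) (hγ₁ : γ < 1) (f : Bool × Bool → ℝ) (q : Bool × Bool) :
    (mdp γ hγ₀ hγ₁).projBellman cell dataDist f q =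
      bif cell q then (mdp γ hγ₀ hγ₁).bellman f (true, true)
      else ((mdp γ hγ₀ hγ₁).bellman f (true, false) +
        (mdp γ hγ₀ hγ₁).bellman f (false, false)) / 2 := by
  rcases q with ⟨_ | _, _ | _⟩ <;>
    simp [FinMDP.projBellman, Fintype.sum_prod_type, cell, dataDist] <;>
    ring

theorem d0_mdp_le (hγ₀ : 0 ≤ γ) (hγ₁ : γ < 1) (q : Bool × Bool) :
    (mdp γ hγ₀ hγ₁).d0 q.1 ≤ 3 * dataDist q := by
  rcases q with ⟨_ | _, _ | _⟩ <;> norm_num [dataDist]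

theorem ret_mdp_deterministic (hγ₀ : 0 ≤ γ) (hγ₁ : γ < 1) (g : Bool → Bool) :
    (mdp γ hγ₀ hγ₁).ret ((mdp γ hγ₀ hγ₁).deterministic g) =
      bif g true then 1 / (1 - γ) else 0 := by
  rw [(allAbsorbing_mdp hγ₀ hγ₁).ret_deterministic]
  cases h : g true <;> simp [h]

theorem bellman_optimalQ (hγ₀ : 0 ≤ γ) (hγ₁ : γ < 1) :
    (mdp γ hγ₀ hγ₁).bellman (optimalQ γ) = optimalQ γ := by
  have hγ : 0 < 1 - γ := sub_pos.2 hγ₁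
  have hmax : γ / (1 - γ) ≤ 1 / (1 - γ) := by gcongr
  funext q
  rw [bellman_mdp]
  rcases q with ⟨_ | _, _ | _⟩ <;>
    simp only [optimalQ, cell, Bool.and_true, Bool.and_false, cond_true, cond_false, max_self,
      max_eq_left hmax] <;>
    field_simp <;>
    ring

theorem spuriousQ_start_lt (hγ₁ : γ < 1) :
    spuriousQ γ (true, true) < spuriousQ γ (true, false) := by
  have hγ : 0 < 1 - γ := sub_pos.2 hγ₁
  simp only [spuriousQ]
  rw [← sub_pos]
  field_simp
  linarith

theorem spuriousQ_unreachable_le (hγ₀ : 0 < γ) (hγ₁ : γ < 1) :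
    spuriousQ γ (false, false) ≤ spuriousQ γ (false, true) :=
  le_add_of_nonneg_right (div_nonneg (by linarith) hγ₀.le)

theorem spuriousQ_ne_optimalQ (hγ₁ : γ < 1) : spuriousQ γ ≠ optimalQ γ := by
  have hlt : γ / (1 - γ) < 2 / (1 - γ) :=
    div_lt_div_of_pos_right (by linarith) (sub_pos.2 hγ₁)
  exact fun h => hlt.ne' (congrFun h (true, false))

theorem eq_false_of_forall_spuriousQ_le (hγ₁ : γ < 1) {b : Bool}
    (hb : ∀ a, spuriousQ γ (true, a) ≤ spuriousQ γ (true, b)) : b = false :=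
  Bool.eq_false_of_not_eq_true fun h => (h ▸ hb false).not_gt (spuriousQ_start_lt hγ₁)

theorem bellman_spuriousQ_start (hγ₀ : 0 ≤ γ) (hγ₁ : γ < 1) (a : Bool) :
    (mdp γ hγ₀ hγ₁).bellman (spuriousQ γ) (true, a) =
      (bif a then 1 else 0) + γ * (2 / (1 - γ)) := by
  rw [bellman_mdp, max_eq_right (spuriousQ_start_lt hγ₁).le]
  rfl

theorem bellman_spuriousQ_unreachable (hγ₀ : 0 < γ) (hγ₁ : γ < 1) (a : Bool) :
    (mdp γ hγ₀.le hγ₁).bellman (spuriousQ γ) (false, a) = γ * (2 / (1 - γ)) + 4 := by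
  rw [bellman_mdp, max_eq_left (spuriousQ_unreachable_le hγ₀ hγ₁)]
  simp only [spuriousQ, cond_false]
  field_simp
  ring

theorem projBellman_spuriousQ (hγ₀ : 0 < γ) (hγ₁ : γ < 1) {q : Bool × Bool}
    (hq : 0 < dataDist q) :
    (mdp γ hγ₀.le hγ₁).projBellman cell dataDist (spuriousQ γ) q = spuriousQ γ q := by
  have average_eq : (γ * (2 / (1 - γ)) + (γ * (2 / (1 - γ)) + 4)) / 2 = 2 / (1 - γ) := by
    have hγ : 1 - γ ≠ 0 := (sub_pos.2 hγ₁).ne'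
    field_simp
    ring
  rw [projBellman_mdp, bellman_spuriousQ_start, bellman_spuriousQ_start,
    bellman_spuriousQ_unreachable hγ₀, cond_true, cond_false, zero_add, average_eq]
  rcases q with ⟨_ | _, _ | _⟩
  case false.true => exact absurd hq (by simp [dataDist])
  all_goals rfl

end Counterexample

open FinMDP Counterexample in
theorem stmt16_general (γ : ℝ) (hγ₀ : 0 < γ) (hγ₁ : γ < 1) :
    ∃ (M : FinMDP) (X : Type) (φ : M.S × M.A → X) (μ : M.S × M.A → ℝ)
      (Qstar Q : M.S × M.A → ℝ),
      M.γ = γ ∧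
      (∃ s0 : M.S, M.d0 s0 = 1) ∧
      (∀ q, 0 ≤ μ q) ∧ (∑ q, μ q = 1) ∧
      {q : M.S × M.A | 0 < μ q} ≠ Set.univ ∧
      (∃ C : ℝ, ∀ π : M.S → M.A → ℝ, M.IsPolicy π →
        ∀ (t : ℕ) (q : M.S × M.A), M.occ π t q ≤ C * μ q) ∧
      M.bellman Qstar = Qstar ∧
      Q ≠ Qstar ∧
      (∀ q, 0 < μ q →
        Qstar q = M.projBellman φ μ Qstar q ∧ Q q = M.projBellman φ μ Q q) ∧
      (∀ πg : M.S → M.A, (∀ s a, Q (s, a) ≤ Q (s, πg s)) →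
        ∃ π' : M.S → M.A → ℝ, M.IsPolicy π' ∧
          M.ret (fun s a => if a = πg s then 1 else 0) < M.ret π') := by
  have hM := allAbsorbing_mdp hγ₀.le hγ₁
  refine ⟨mdp γ hγ₀.le hγ₁, Bool, cell, dataDist, optimalQ γ, spuriousQ γ, rfl, ⟨true, rfl⟩,
    dataDist_nonneg, sum_dataDist, support_dataDist_ne_univ,
    ⟨3, fun π hπ t q => (hM.occ_le hπ t q).trans (d0_mdp_le hγ₀.le hγ₁ q)⟩,
    bellman_optimalQ hγ₀.le hγ₁, spuriousQ_ne_optimalQ hγ₁, fun q hq => ⟨?_, ?_⟩,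
    fun g hg => ⟨deterministic _ fun _ => true, isPolicy_deterministic _, ?_⟩⟩
  · exact (projBellman_eq_self_of_factorsThrough dataDist_nonneg hq (bellman_optimalQ hγ₀.le hγ₁)
      (optimalQ_factorsThrough γ)).symm
  · exact (projBellman_spuriousQ hγ₀ hγ₁ hq).symm
  · have greedy_start : g true = false := eq_false_of_forall_spuriousQ_le hγ₁ (hg true)
    calc (mdp γ hγ₀.le hγ₁).ret (deterministic _ g) = 0 := by
          rw [ret_mdp_deterministic, greedy_start, cond_false]
      _ < 1 / (1 - γ) := one_div_pos.2 (sub_pos.2 hγ₁)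
      _ = (mdp γ hγ₀.le hγ₁).ret (deterministic _ fun _ => true) :=
          (ret_mdp_deterministic hγ₀.le hγ₁ fun _ => true).symm

/-- (Counterexample: contrived `μ`.)  There exist a finite MDP with
`γ = 0.9` and a deterministic initial state, a data distribution `μ` whose support is
a strict subset of `S × A`, an aggregation `φ`, and a function `Q`, such that:
(i) all occupancy distributions of all policies are bounded by `C μ` for some finite
`C` (standard concentrability holds); (ii) `Q ≠ Q⋆`, yet both `Q⋆` and `Q` are fixed
points of the projected Bellman operator `T_φ^μ` on the support of `μ`; and
(iii) the greedy policy of `Q` is strictly suboptimal. -/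
theorem stmt16 :
    ∃ (M : FinMDP) (X : Type) (φ : M.S × M.A → X) (μ : M.S × M.A → ℝ)
      (Qstar Q : M.S × M.A → ℝ),
      -- the MDP has γ = 0.9 and a deterministic initial state
      M.γ = 0.9 ∧
      (∃ s0 : M.S, M.d0 s0 = 1) ∧
      -- μ is a probability distribution whose support is a strict subset of S × A
      (∀ q, 0 ≤ μ q) ∧ (∑ q, μ q = 1) ∧
      {q : M.S × M.A | 0 < μ q} ≠ Set.univ ∧
      -- (i) standard concentrability (Assumption 2) holds with a finite constant C
      (∃ C : ℝ, ∀ π : M.S → M.A → ℝ, M.IsPolicy π →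
        ∀ (t : ℕ) (q : M.S × M.A), M.occ π t q ≤ C * μ q) ∧
      -- Q⋆ is the (unique) fixed point of the Bellman optimality operator
      M.bellman Qstar = Qstar ∧
      -- (ii) Q ≠ Q⋆, yet both are fixed points of T_φ^μ on the support of μ
      Q ≠ Qstar ∧
      (∀ q, 0 < μ q →
        Qstar q = M.projBellman φ μ Qstar q ∧ Q q = M.projBellman φ μ Q q) ∧
      -- (iii) every greedy policy of Q is strictly suboptimal
      (∀ πg : M.S → M.A, (∀ s a, Q (s, a) ≤ Q (s, πg s)) →
        ∃ π' : M.S → M.A → ℝ, M.IsPolicy π' ∧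
          M.ret (fun s a => if a = πg s then 1 else 0) < M.ret π') :=
  stmt16_general 0.9 (by norm_num) (by norm_num)
end
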